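/- Strict monotonicity of the critical density of ρ-percolation: let q̄ := sup{q ∈ [0,1] : ρ_c(q) < 1}. For all 0 ≤ q < q' ≤ q̄ one has ρ_c(q') − ρ_c(q) ≥ (1 − ρ_c(q))·(q' − q)/(1 − q); in particular, q ↦ ρ_c(q) is strictly increasing on [0, q̄]. -/

import Mathlib

open MeasureTheory Filter ENNReal

/-- Site-percolation configurations on `ℤ^d`: a site is open iff its value is `true`. -/
abbrev ConfigD (d : ℕ) := (Fin d → ℤ) → Bool

/-- `P` is the i.i.d. Bernoulli(`p`) product measure on `{0,1}^ι`: it is a probability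
measure whose cylinder events have the correct product probabilities. -/
def IsBernoulli {ι : Type*} (p : ℝ) (P : Measure (ι → Bool)) : Prop :=
  IsProbabilityMeasure P ∧
    ∀ (s : Finset ι) (f : ι → Bool),
      P {ω | ∀ x ∈ s, ω x = f x} =
        ∏ x ∈ s, (if f x then ENNReal.ofReal p else ENNReal.ofReal (1 - p))

/-- An oriented nearest-neighbour path in `ℤ^d` started at the origin: every step adds
one standard basis vector. -/
def IsOrientedPath {d : ℕ} (x : ℕ → Fin d → ℤ) : Prop :=
  x 0 = 0 ∧ ∀ n : ℕ, ∃ i : Fin d, x (n + 1) = x n + Pi.single i 1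

/-- The event that `ρ`-percolation occurs: some oriented nearest-neighbour path started at
the origin satisfies `liminf_n (1/n) ∑_{i=1}^n 1_{x̄ᵢ closed} ≥ ρ`. -/
def RhoPerc {d : ℕ} (ρ : ℝ) : Set (ConfigD d) :=
  {ω | ∃ x : ℕ → Fin d → ℤ, IsOrientedPath x ∧
    ρ ≤ atTop.liminf fun n : ℕ =>
      (∑ i ∈ Finset.Icc 1 n, if ω (x i) then (0 : ℝ) else 1) / n}

/-- `ρ_c(q) = sup {ρ | P_{1−q}(ρ-percolation occurs) = 1}`, where `P p` is the
Bernoulli(`p`) product measure on `{0,1}^{ℤ^d}`. -/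
noncomputable def rhoC {d : ℕ} (P : ℝ → Measure (ConfigD d)) (q : ℝ) : ℝ :=
  sSup {ρ : ℝ | P (1 - q) (RhoPerc ρ) = 1}

/-- `q̄ = sup {q ∈ [0,1] | ρ_c(q) < 1}`. -/
noncomputable def qbar {d : ℕ} (P : ℝ → Measure (ConfigD d)) : ℝ :=
  sSup {q : ℝ | q ∈ Set.Icc (0 : ℝ) 1 ∧ rhoC P q < 1}

/-!
Open the sites with probability `1 - q`, then keep each open site open with probability
`r = (1 - q') / (1 - q)`, independently: the thinned field is Bernoulli with parameter `1 - q'`.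
If a path has closed density at least `ρ` before the thinning, then by the strong law of large
numbers along this path a fraction `1 - r` of its open sites gets closed, so that its closed
density becomes at least `1 - r + r * ρ`. Hence `1 - ρ_c(q') ≤ r * (1 - ρ_c(q))`.
-/

section SubGaussian

open ProbabilityTheory
open scoped NNReal Topology

variable {Ω : Type*} {mΩ : MeasurableSpace Ω} {μ : Measure Ω} {c : ℝ≥0}

theorem hasSubgaussianMGF_mono {X : Ω → ℝ} {c' : ℝ≥0} (h : HasSubgaussianMGF X c μ)
    (hc : c ≤ c') : HasSubgaussianMGF X c' μ where
  integrable_exp_mul := h.integrable_exp_mul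
  mgf_le t := (h.mgf_le t).trans (by gcongr)

theorem measure_nat_mul_le_of_hasSubgaussianMGF {X : Ω → ℝ} {n : ℕ}
    (h : HasSubgaussianMGF X (n * c) μ) {ε : ℝ} (hε : 0 ≤ ε) :
    μ.real {ω | n * ε ≤ X ω} ≤ Real.exp (-ε ^ 2 / (2 * c)) ^ n := by
  refine (h.measure_ge_le (by positivity)).trans_eq ?_
  rw [← Real.exp_nat_mul]
  congr 1
  push_cast
  rcases eq_or_ne (n : ℝ) 0 with hn | hn
  · simp [hn]
  · field_simp

variable {Y : ℕ → Ω → ℝ}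

theorem ae_eventually_lt_nat_mul_of_hasSubgaussianMGF
    (hY : ∀ n, HasSubgaussianMGF (Y n) (n * c) μ) {ε : ℝ} (hε : 0 < ε) :
    ∀ᵐ ω ∂μ, ∀ᶠ n : ℕ in atTop, Y n ω < n * ε := by
  have : IsFiniteMeasure μ := by
    simpa [integrable_const_iff] using (hY 0).integrable_exp_mul 0
  -- A positive variance proxy keeps the exponential bound away from division by zero.
  have htail (n : ℕ) :
      μ {ω | n * ε ≤ Y n ω} ≤ ENNReal.ofReal (Real.exp (-ε ^ 2 / (2 * (c + 1 : ℝ≥0))) ^ n) := by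
    rw [← ofReal_measureReal]
    exact ENNReal.ofReal_le_ofReal <| measure_nat_mul_le_of_hasSubgaussianMGF
      (hasSubgaussianMGF_mono (hY n) (by gcongr; exact le_self_add)) hε.le
  have hexp : Real.exp (-ε ^ 2 / (2 * (c + 1 : ℝ≥0))) < 1 :=
    Real.exp_lt_one_iff.2 (div_neg_of_neg_of_pos (neg_neg_of_pos (by positivity)) (by positivity))
  have hsum : ∑' n, μ {ω | n * ε ≤ Y n ω} ≠ ∞ :=
    ne_top_of_le_ne_top (summable_geometric_of_lt_one (Real.exp_pos _).le hexp).tsum_ofReal_ne_top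
      (ENNReal.tsum_le_tsum htail)
  filter_upwards [ae_eventually_notMem hsum] with ω hω
  simpa only [Set.mem_ofPred_eq, not_le] using hω

theorem ae_tendsto_div_of_hasSubgaussianMGF
    (hY : ∀ n, HasSubgaussianMGF (Y n) (n * c) μ) :
    ∀ᵐ ω ∂μ, Tendsto (fun n => Y n ω / n) atTop (𝓝 0) := by
  have hupper (k : ℕ) :=
    ae_eventually_lt_nat_mul_of_hasSubgaussianMGF hY (Nat.one_div_pos_of_nat (α := ℝ) (n := k))
  have hlower (k : ℕ) := ae_eventually_lt_nat_mul_of_hasSubgaussianMGF (fun n => (hY n).neg)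
    (Nat.one_div_pos_of_nat (α := ℝ) (n := k))
  filter_upwards [ae_all_iff.2 hupper, ae_all_iff.2 hlower] with ω hω_upper hω_lower
  refine Metric.nhds_basis_ball_inv_nat_succ.tendsto_right_iff.2 fun k _ => ?_
  filter_upwards [hω_upper k, hω_lower k, eventually_gt_atTop 0] with n hn_upper hn_lower hn
  have hn' : (0 : ℝ) < n := Nat.cast_pos.2 hn
  rw [mem_ball_zero_iff, Real.norm_eq_abs, abs_div, Nat.abs_cast, div_lt_iff₀' hn']
  exact abs_lt.2 ⟨neg_lt.1 hn_lower, hn_upper⟩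

end SubGaussian

section OuterMeasure

variable {α β γ : Type*} [MeasurableSpace α] [MeasurableSpace β] [MeasurableSpace γ]
  {μ : Measure α} {ν : Measure β} [IsProbabilityMeasure μ] [IsProbabilityMeasure ν]

theorem measure_prod_eq_one_of_forall_ae {A : Set α} {B : Set (α × β)} (hA : μ A = 1)
    (hB : ∀ a ∈ A, ∀ᵐ b ∂ν, (a, b) ∈ B) : μ.prod ν B = 1 := by
  -- Neither `A` nor `B` has to be measurable, so Fubini is applied to a measurable hull of `B`.
  set M := toMeasurable (μ.prod ν) B
  have hM : MeasurableSet M := measurableSet_toMeasurable _ _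
  have hfiber : MeasurableSet {a | ν (Prod.mk a ⁻¹' M) = 1} :=
    measurable_measure_prodMk_left hM (measurableSet_singleton 1)
  have hsub : A ⊆ {a | ν (Prod.mk a ⁻¹' M) = 1} := fun a ha =>
    (mem_ae_iff_prob_eq_one (measurable_prodMk_left hM)).1
      ((hB a ha).mono fun _ hb => subset_toMeasurable _ _ hb)
  have hfull : ∀ᵐ a ∂μ, ν (Prod.mk a ⁻¹' M) = 1 :=
    (mem_ae_iff_prob_eq_one hfiber).2
      (le_antisymm prob_le_one (hA.symm.trans_le (measure_mono hsub)))
  calc μ.prod ν B = μ.prod ν M := (measure_toMeasurable B).symm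
    _ = ∫⁻ a, ν (Prod.mk a ⁻¹' M) ∂μ := Measure.prod_apply hM
    _ = 1 := by rw [lintegral_congr_ae hfull, lintegral_one, measure_univ]

theorem measure_map_prod_eq_one_of_forall_ae {f : α × β → γ} (hf : Measurable f) {A : Set α}
    {C : Set γ} (hA : μ A = 1) (hC : ∀ a ∈ A, ∀ᵐ b ∂ν, f (a, b) ∈ C) :
    (μ.prod ν).map f C = 1 := by
  have := Measure.isProbabilityMeasure_map (μ := μ.prod ν) hf.aemeasurable
  refine le_antisymm prob_le_one ?_
  rw [← measure_prod_eq_one_of_forall_ae (B := f ⁻¹' C) hA hC]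
  exact Measure.le_map_apply hf.aemeasurable C

end OuterMeasure

section Bernoulli

open ProbabilityTheory
open scoped Topology

variable {ι : Type*}

/-- The event that all sites of `s` are open. These cylinders suffice to identify a measure, and
unlike general cylinders they pull back to rectangles under the conjunction of two fields. -/
def allOpen (s : Finset ι) : Set (ι → Bool) :=
  (s : Set ι).pi fun _ => {true}

theorem mem_allOpen {s : Finset ι} {ω : ι → Bool} : ω ∈ allOpen s ↔ ∀ x ∈ s, ω x = true :=
  Iff.rfl

theorem measurableSet_allOpen (s : Finset ι) : MeasurableSet (allOpen s) :=
  .pi s.countable_toSet fun _ _ => measurableSet_singleton _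

theorem isPiSystem_range_allOpen : IsPiSystem (Set.range (allOpen (ι := ι))) := by
  classical
  rintro _ ⟨s, rfl⟩ _ ⟨t, rfl⟩ -
  exact ⟨s ∪ t, by simp only [allOpen, Finset.coe_union, Set.union_pi]⟩

theorem generateFrom_range_allOpen :
    MeasurableSpace.pi = MeasurableSpace.generateFrom (Set.range (allOpen (ι := ι))) := by
  apply le_antisymm
  · refine iSup_le fun x => measurable_iff_comap_le.1 ?_
    refine @measurable_to_bool _ (MeasurableSpace.generateFrom _) _ ?_
    exact MeasurableSpace.measurableSet_generateFrom ⟨{x}, by ext; simp [mem_allOpen]⟩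
  · refine MeasurableSpace.generateFrom_le ?_
    rintro _ ⟨s, rfl⟩
    exact measurableSet_allOpen s

theorem measure_ext_of_allOpen {μ ν : Measure (ι → Bool)} [IsProbabilityMeasure μ]
    [IsProbabilityMeasure ν] (h : ∀ s : Finset ι, μ (allOpen s) = ν (allOpen s)) : μ = ν :=
  ext_of_generate_finite _ generateFrom_range_allOpen isPiSystem_range_allOpen
    (by rintro _ ⟨s, rfl⟩; exact h s) (by simp only [measure_univ])

theorem measurable_inf_config :
    Measurable fun z : (ι → Bool) × (ι → Bool) => z.1 ⊓ z.2 :=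
  measurable_pi_lambda _ fun x =>
    (measurable_of_countable fun b : Bool × Bool => b.1 ⊓ b.2).comp
      (by fun_prop : Measurable fun z : (ι → Bool) × (ι → Bool) => (z.1 x, z.2 x))

theorem preimage_inf_allOpen (s : Finset ι) :
    (fun z : (ι → Bool) × (ι → Bool) => z.1 ⊓ z.2) ⁻¹' allOpen s = allOpen s ×ˢ allOpen s := by
  ext z
  simp only [Set.mem_preimage, Set.mem_prod, mem_allOpen, Pi.inf_apply, Bool.min_eq_and,
    Bool.and_eq_true, forall_and]

namespace IsBernoulli

variable {p r : ℝ} {μ ν ξ : Measure (ι → Bool)}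

theorem measure_allOpen (h : IsBernoulli p μ) (s : Finset ι) :
    μ (allOpen s) = ENNReal.ofReal p ^ s.card := by
  simpa [allOpen, Set.pi] using h.2 s fun _ => true

theorem measure_eval_eq (h : IsBernoulli p μ) (x : ι) (b : Bool) :
    μ {ω | ω x = b} = if b then ENNReal.ofReal p else ENNReal.ofReal (1 - p) := by
  simpa using h.2 {x} fun _ => b

theorem mem_Icc (h : IsBernoulli p μ) (x : ι) : p ∈ Set.Icc (0 : ℝ) 1 := by
  have := h.1
  have hopen : ENNReal.ofReal p ≤ 1 := (h.measure_eval_eq x true).symm.trans_le prob_le_one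
  have hclosed : ENNReal.ofReal (1 - p) ≤ 1 :=
    (h.measure_eval_eq x false).symm.trans_le prob_le_one
  rw [ENNReal.ofReal_le_one] at hopen hclosed
  exact ⟨by linarith, hopen⟩

theorem map_inf (hμ : IsBernoulli p μ) (hν : IsBernoulli r ν) (hξ : IsBernoulli (p * r) ξ) :
    (μ.prod ν).map (fun z => z.1 ⊓ z.2) = ξ := by
  have := hμ.1
  have := hν.1
  have := hξ.1
  have := Measure.isProbabilityMeasure_map (μ := μ.prod ν) measurable_inf_config.aemeasurable
  refine measure_ext_of_allOpen fun s => ?_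
  rw [Measure.map_apply measurable_inf_config (measurableSet_allOpen s), preimage_inf_allOpen,
    Measure.prod_prod, hμ.measure_allOpen, hν.measure_allOpen, hξ.measure_allOpen, ← mul_pow]
  rcases s.eq_empty_or_nonempty with rfl | ⟨x, -⟩
  · simp
  · rw [ENNReal.ofReal_mul (hμ.mem_Icc x).1]

theorem iIndepFun_eval (h : IsBernoulli p μ) : iIndepFun (fun x (ω : ι → Bool) => ω x) μ := by
  have := h.1
  have (x : ι) : IsProbabilityMeasure (μ.map fun ω : ι → Bool => ω x) :=
    Measure.isProbabilityMeasure_map (measurable_pi_apply x).aemeasurable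
  have hmarginal (x : ι) : μ.map (fun ω => ω x) {true} = ENNReal.ofReal p := by
    rw [Measure.map_apply (measurable_pi_apply x) (measurableSet_singleton _)]
    exact h.measure_eval_eq x true
  rw [iIndepFun_iff_map_fun_eq_infinitePi_map fun x => measurable_pi_apply x]
  refine Measure.map_id.trans (measure_ext_of_allOpen fun s => ?_)
  rw [h.measure_allOpen, allOpen,
    Measure.infinitePi_pi _ fun _ _ => measurableSet_singleton _]
  simp only [hmarginal, Finset.prod_const]

theorem integral_eval (h : IsBernoulli p μ) (x : ι) :
    ∫ ω, (if ω x then (1 : ℝ) else 0) ∂μ = p := by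
  have hind : (fun ω : ι → Bool => if ω x then (1 : ℝ) else 0) =
      Set.indicator {ω | ω x = true} 1 := by
    ext ω
    simp only [Set.indicator_apply, Set.mem_ofPred_eq, Pi.one_apply]
  have hmeas : MeasurableSet {ω : ι → Bool | ω x = true} :=
    measurableSet_eq_fun (measurable_pi_apply x) measurable_const
  rw [hind, integral_indicator_one hmeas, Measure.real, h.measure_eval_eq x true, if_pos rfl,
    ENNReal.toReal_ofReal (h.mem_Icc x).1]

theorem hasSubgaussianMGF_eval (h : IsBernoulli p μ) (x : ι) :
    HasSubgaussianMGF (fun ω : ι → Bool => (if ω x then (1 : ℝ) else 0) - p)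
      ((‖(1 : ℝ) - 0‖₊ / 2) ^ 2) μ := by
  have := h.1
  have hmeas : Measurable fun ω : ι → Bool => if ω x then (1 : ℝ) else 0 :=
    (measurable_of_countable fun b : Bool => if b then (1 : ℝ) else 0).comp (measurable_pi_apply x)
  simpa only [h.integral_eval] using hasSubgaussianMGF_of_mem_Icc hmeas.aemeasurable
    (ae_of_all μ fun ω => by split_ifs <;> simp)

theorem ae_tendsto_weighted_average (h : IsBernoulli p μ) {x : ℕ → ι}
    (hx : Function.Injective x) {a : ι → ℝ} (ha : ∀ z, |a z| ≤ 1) :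
    ∀ᵐ ω ∂μ, Tendsto (fun n : ℕ =>
      (∑ i ∈ Finset.Icc 1 n, a (x i) * ((if ω (x i) then (1 : ℝ) else 0) - p)) / n)
        atTop (𝓝 0) := by
  have hindep : iIndepFun
      (fun i (ω : ι → Bool) => a (x i) * ((if ω (x i) then (1 : ℝ) else 0) - p)) μ :=
    (h.iIndepFun_eval.precomp hx).comp
      (fun i (b : Bool) => a (x i) * ((if b then (1 : ℝ) else 0) - p))
      fun _ => measurable_of_countable _
  have hsub (i : ℕ) : HasSubgaussianMGF
      (fun ω : ι → Bool => a (x i) * ((if ω (x i) then (1 : ℝ) else 0) - p))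
      ((‖(1 : ℝ) - 0‖₊ / 2) ^ 2) μ :=
    hasSubgaussianMGF_mono ((h.hasSubgaussianMGF_eval (x i)).const_mul (a (x i)))
      (mul_le_of_le_one_left' (NNReal.coe_le_coe.1 ((sq_le_one_iff_abs_le_one _).2 (ha _))))
  refine ae_tendsto_div_of_hasSubgaussianMGF (c := (‖(1 : ℝ) - 0‖₊ / 2) ^ 2) fun n => ?_
  simpa using HasSubgaussianMGF.sum_of_iIndepFun hindep (s := Finset.Icc 1 n) fun i _ => hsub i

end IsBernoulli

end Bernoulli

section ClosedDensity

open scoped Topology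

variable {ι : Type*}

/-- The proportion of closed sites among `x 1, …, x n`, with value `0` for `n = 0`. It is the
quantity whose lower limit defines `RhoPerc`. -/
noncomputable def closedDensity (ω : ι → Bool) (x : ℕ → ι) (n : ℕ) : ℝ :=
  (∑ i ∈ Finset.Icc 1 n, if ω (x i) then (0 : ℝ) else 1) / n

theorem closedDensity_nonneg (ω : ι → Bool) (x : ℕ → ι) (n : ℕ) : 0 ≤ closedDensity ω x n :=
  div_nonneg (Finset.sum_nonneg fun i _ => by split_ifs <;> norm_num) n.cast_nonneg

theorem closedDensity_le_one (ω : ι → Bool) (x : ℕ → ι) (n : ℕ) : closedDensity ω x n ≤ 1 := by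
  refine div_le_one_of_le₀ ?_ n.cast_nonneg
  calc (∑ i ∈ Finset.Icc 1 n, if ω (x i) then (0 : ℝ) else 1)
      ≤ ∑ _i ∈ Finset.Icc 1 n, (1 : ℝ) := Finset.sum_le_sum fun i _ => by split_ifs <;> norm_num
    _ = n := by simp

theorem isBoundedUnder_ge_closedDensity (ω : ι → Bool) (x : ℕ → ι) :
    atTop.IsBoundedUnder (· ≥ ·) (closedDensity ω x) :=
  isBoundedUnder_of ⟨0, closedDensity_nonneg ω x⟩

theorem isBoundedUnder_le_closedDensity (ω : ι → Bool) (x : ℕ → ι) :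
    atTop.IsBoundedUnder (· ≤ ·) (closedDensity ω x) :=
  isBoundedUnder_of ⟨1, closedDensity_le_one ω x⟩

theorem liminf_closedDensity_nonneg (ω : ι → Bool) (x : ℕ → ι) :
    0 ≤ liminf (closedDensity ω x) atTop :=
  le_liminf_of_le (isBoundedUnder_le_closedDensity ω x).isCoboundedUnder_ge
    (Eventually.of_forall (closedDensity_nonneg ω x))

theorem liminf_closedDensity_le_one (ω : ι → Bool) (x : ℕ → ι) :
    liminf (closedDensity ω x) atTop ≤ 1 :=
  liminf_le_of_frequently_le (Frequently.of_forall (closedDensity_le_one ω x))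
    (isBoundedUnder_ge_closedDensity ω x)

theorem closedDensity_inf (r : ℝ) (ω η : ι → Bool) (x : ℕ → ι) {n : ℕ} (hn : n ≠ 0) :
    closedDensity (ω ⊓ η) x n = 1 - r + r * closedDensity ω x n -
      (∑ i ∈ Finset.Icc 1 n,
        (if ω (x i) then (1 : ℝ) else 0) * ((if η (x i) then (1 : ℝ) else 0) - r)) / n := by
  have hsite (z : ι) : (if (ω ⊓ η) z then (0 : ℝ) else 1) = 1 - r + r * (if ω z then 0 else 1) -
      (if ω z then 1 else 0) * ((if η z then 1 else 0) - r) := by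
    cases hω : ω z <;> cases hη : η z <;> simp [hω, hη]
  simp only [closedDensity, hsite, Finset.sum_sub_distrib, Finset.sum_add_distrib,
    ← Finset.mul_sum, Finset.sum_const, Nat.card_Icc, add_tsub_cancel_right, nsmul_eq_mul]
  field_simp

theorem le_liminf_closedDensity_inf {r : ℝ} (hr : 0 ≤ r) {ω η : ι → Bool} {x : ℕ → ι}
    (h : Tendsto (fun n : ℕ => (∑ i ∈ Finset.Icc 1 n,
      (if ω (x i) then (1 : ℝ) else 0) * ((if η (x i) then (1 : ℝ) else 0) - r)) / n)
        atTop (𝓝 0)) :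
    1 - r + r * liminf (closedDensity ω x) atTop ≤ liminf (closedDensity (ω ⊓ η) x) atTop := by
  set f : ℝ → ℝ := fun t => 1 - r + r * t
  set e : ℕ → ℝ := fun n => -((∑ i ∈ Finset.Icc 1 n,
    (if ω (x i) then (1 : ℝ) else 0) * ((if η (x i) then (1 : ℝ) else 0) - r)) / n)
  have he : Tendsto e atTop (𝓝 0) := by simpa only [neg_zero] using h.neg
  have hf_mono : Monotone f := (monotone_id.const_mul hr).const_add (1 - r)
  have hge := isBoundedUnder_ge_closedDensity ω x
  have hle := isBoundedUnder_le_closedDensity ω x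
  calc f (liminf (closedDensity ω x) atTop)
      = liminf (f ∘ closedDensity ω x) atTop + liminf e atTop := by
        rw [hf_mono.map_liminf_of_continuousAt _ (by fun_prop) hle.isCoboundedUnder_ge hge,
          he.liminf_eq, add_zero]
    _ ≤ liminf (f ∘ closedDensity ω x + e) atTop :=
        le_liminf_add (hf_mono.isBoundedUnder_ge_comp hge) (hf_mono.isBoundedUnder_le_comp hle)
          he.isBoundedUnder_ge he.isCoboundedUnder_ge
    _ = liminf (closedDensity (ω ⊓ η) x) atTop := by
        refine liminf_congr ?_
        filter_upwards [eventually_ne_atTop 0] with n hn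
        exact (closedDensity_inf r ω η x hn).symm

end ClosedDensity

section RhoPercolation

variable {d : ℕ}

namespace IsOrientedPath

theorem sum_coord {x : ℕ → Fin d → ℤ} (hx : IsOrientedPath x) (n : ℕ) : ∑ i, x n i = n := by
  induction n with
  | zero => simp [hx.1]
  | succ n ih =>
    obtain ⟨i, hi⟩ := hx.2 n
    simp [hi, Finset.sum_add_distrib, ih]

theorem injective {x : ℕ → Fin d → ℤ} (hx : IsOrientedPath x) : Function.Injective x := by
  intro m n h
  have hm := hx.sum_coord m
  rw [h, hx.sum_coord n] at hm
  exact_mod_cast hm.symm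

end IsOrientedPath

theorem exists_isOrientedPath (hd : 1 ≤ d) : ∃ x : ℕ → Fin d → ℤ, IsOrientedPath x :=
  ⟨fun n => n • Pi.single ⟨0, hd⟩ 1, zero_nsmul _, fun n => ⟨⟨0, hd⟩, succ_nsmul _ n⟩⟩

theorem mem_rhoPerc {ρ : ℝ} {ω : ConfigD d} :
    ω ∈ RhoPerc ρ ↔ ∃ x, IsOrientedPath x ∧ ρ ≤ liminf (closedDensity ω x) atTop :=
  Iff.rfl

theorem rhoPerc_eq_univ (hd : 1 ≤ d) {ρ : ℝ} (hρ : ρ ≤ 0) : RhoPerc (d := d) ρ = Set.univ := by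
  obtain ⟨x, hx⟩ := exists_isOrientedPath hd
  exact Set.eq_univ_of_forall fun ω =>
    mem_rhoPerc.2 ⟨x, hx, hρ.trans (liminf_closedDensity_nonneg ω x)⟩

theorem le_one_of_measure_rhoPerc_eq_one {ρ : ℝ} {μ : Measure (ConfigD d)}
    (h : μ (RhoPerc ρ) = 1) : ρ ≤ 1 := by
  obtain ⟨ω, x, -, hρ⟩ := nonempty_of_measure_ne_zero (h.trans_ne one_ne_zero)
  exact hρ.trans (liminf_closedDensity_le_one ω x)

theorem ae_inf_mem_rhoPerc {r ρ : ℝ} {ν : Measure (ConfigD d)} (hν : IsBernoulli r ν)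
    {ω : ConfigD d} (hω : ω ∈ RhoPerc ρ) :
    ∀ᵐ η ∂ν, ω ⊓ η ∈ RhoPerc (d := d) (1 - r + r * ρ) := by
  obtain ⟨x, hx, hρ⟩ := mem_rhoPerc.1 hω
  have hr : 0 ≤ r := (hν.mem_Icc 0).1
  filter_upwards [hν.ae_tendsto_weighted_average hx.injective
    (a := fun z => if ω z then 1 else 0) fun z => by split_ifs <;> simp] with η hη
  refine mem_rhoPerc.2 ⟨x, hx, le_trans ?_ (le_liminf_closedDensity_inf hr hη)⟩
  gcongr

theorem measure_rhoPerc_eq_one_of_thinning {p r ρ : ℝ} {μ ν ξ : Measure (ConfigD d)}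
    (hμ : IsBernoulli p μ) (hν : IsBernoulli r ν) (hξ : IsBernoulli (p * r) ξ)
    (h : μ (RhoPerc ρ) = 1) : ξ (RhoPerc (1 - r + r * ρ)) = 1 := by
  have := hμ.1
  have := hν.1
  rw [← hμ.map_inf hν hξ]
  exact measure_map_prod_eq_one_of_forall_ae measurable_inf_config h
    fun _ hω => ae_inf_mem_rhoPerc hν hω

end RhoPercolation

section CriticalDensity

variable {d : ℕ} {P : ℝ → Measure (ConfigD d)} {q q' : ℝ}

theorem bddAbove_measure_rhoPerc_eq_one (μ : Measure (ConfigD d)) :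
    BddAbove {ρ : ℝ | μ (RhoPerc ρ) = 1} :=
  ⟨1, fun _ => le_one_of_measure_rhoPerc_eq_one⟩

theorem nonempty_measure_rhoPerc_eq_one (hd : 1 ≤ d) (μ : Measure (ConfigD d))
    [IsProbabilityMeasure μ] : {ρ : ℝ | μ (RhoPerc ρ) = 1}.Nonempty :=
  ⟨0, by rw [Set.mem_ofPred_eq, rhoPerc_eq_univ hd le_rfl, measure_univ]⟩

theorem qbar_le_one (P : ℝ → Measure (ConfigD d)) : qbar P ≤ 1 :=
  Real.sSup_le (fun _ hq => hq.1.2) zero_le_one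

theorem one_sub_rhoC_le_mul (hd : 1 ≤ d) (hP : ∀ p ∈ Set.Icc (0 : ℝ) 1, IsBernoulli p (P p))
    (hq : 0 ≤ q) (hqq' : q < q') (hq' : q' ≤ 1) :
    1 - rhoC P q' ≤ (1 - q') / (1 - q) * (1 - rhoC P q) := by
  have h1q : 0 < 1 - q := by linarith
  set r := (1 - q') / (1 - q)
  have hr0 : 0 ≤ r := div_nonneg (by linarith) h1q.le
  have hr1 : r ≤ 1 := div_le_one_of_le₀ (by linarith) h1q.le
  have hμ := hP (1 - q) ⟨h1q.le, by linarith⟩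
  have hξ : IsBernoulli ((1 - q) * r) (P (1 - q')) := by
    rw [mul_div_cancel₀ _ h1q.ne']
    exact hP (1 - q') ⟨by linarith, by linarith⟩
  have := hμ.1
  have hmono : Monotone fun ρ => 1 - r + r * ρ := (monotone_id.const_mul hr0).const_add (1 - r)
  have hsup : 1 - r + r * rhoC P q ≤ rhoC P q' := by
    rw [rhoC, hmono.map_csSup_of_continuousAt (by fun_prop) (nonempty_measure_rhoPerc_eq_one hd _)
      (bddAbove_measure_rhoPerc_eq_one _)]
    refine csSup_le ((nonempty_measure_rhoPerc_eq_one hd _).image _) ?_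
    rintro _ ⟨ρ, hρ, rfl⟩
    exact le_csSup (bddAbove_measure_rhoPerc_eq_one _)
      (measure_rhoPerc_eq_one_of_thinning hμ (hP r ⟨hr0, hr1⟩) hξ hρ)
  linarith

theorem rhoC_sub_rhoC_ge (hd : 1 ≤ d) (hP : ∀ p ∈ Set.Icc (0 : ℝ) 1, IsBernoulli p (P p))
    (hq : 0 ≤ q) (hqq' : q < q') (hq' : q' ≤ 1) :
    (1 - rhoC P q) * (q' - q) / (1 - q) ≤ rhoC P q' - rhoC P q := by
  have h1q : 1 - q ≠ 0 := by linarith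
  calc (1 - rhoC P q) * (q' - q) / (1 - q)
      = 1 - rhoC P q - (1 - q') / (1 - q) * (1 - rhoC P q) := by field_simp; ring
    _ ≤ rhoC P q' - rhoC P q := by linarith [one_sub_rhoC_le_mul hd hP hq hqq' hq']

theorem rhoC_lt_one_of_lt_qbar (hd : 1 ≤ d)
    (hP : ∀ p ∈ Set.Icc (0 : ℝ) 1, IsBernoulli p (P p)) (hq : 0 ≤ q) (hq_lt : q < qbar P) :
    rhoC P q < 1 := by
  have hne : {q : ℝ | q ∈ Set.Icc (0 : ℝ) 1 ∧ rhoC P q < 1}.Nonempty := by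
    by_contra! h
    rw [qbar, h, Real.sSup_empty] at hq_lt
    exact hq.not_gt hq_lt
  obtain ⟨s, ⟨hs, hs_lt⟩, hqs⟩ := exists_lt_of_lt_csSup hne hq_lt
  have hr : 0 ≤ (1 - s) / (1 - q) := div_nonneg (by linarith [hs.2]) (by linarith [hs.2])
  have hpos : 0 < (1 - s) / (1 - q) * (1 - rhoC P q) :=
    (sub_pos.2 hs_lt).trans_le (one_sub_rhoC_le_mul hd hP hq hqs hs.2)
  exact sub_pos.1 (pos_of_mul_pos_right hpos hr)

theorem strictMonoOn_rhoC (hd : 1 ≤ d) (hP : ∀ p ∈ Set.Icc (0 : ℝ) 1, IsBernoulli p (P p)) :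
    StrictMonoOn (rhoC P) (Set.Icc 0 (qbar P)) := by
  intro q hq q' hq' hqq'
  have hq'1 : q' ≤ 1 := hq'.2.trans (qbar_le_one P)
  have hgap : 0 < 1 - rhoC P q :=
    sub_pos.2 (rhoC_lt_one_of_lt_qbar hd hP hq.1 (hqq'.trans_le hq'.2))
  have hpos : 0 < (1 - rhoC P q) * (q' - q) / (1 - q) :=
    div_pos (mul_pos hgap (sub_pos.2 hqq')) (by linarith)
  exact sub_pos.1 (hpos.trans_le (rhoC_sub_rhoC_ge hd hP hq.1 hqq' hq'1))

end CriticalDensity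

theorem rhoC_strictly_increasing_general
    {d : ℕ} (hd : 1 ≤ d)
    (P : ℝ → Measure (ConfigD d)) (hP : ∀ p ∈ Set.Icc (0 : ℝ) 1, IsBernoulli p (P p)) :
    (∀ q q' : ℝ, 0 ≤ q → q < q' → q' ≤ 1 →
      (1 - rhoC P q) * (q' - q) / (1 - q) ≤ rhoC P q' - rhoC P q) ∧
    StrictMonoOn (rhoC P) (Set.Icc 0 (qbar P)) :=
  ⟨fun _ _ => rhoC_sub_rhoC_ge hd hP, strictMonoOn_rhoC hd hP⟩

/-- Strict monotonicity of the critical density of `ρ`-percolation: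
for `0 ≤ q < q' ≤ q̄ := sup{q ∈ [0,1] | ρ_c(q) < 1}` one has
`ρ_c(q') − ρ_c(q) ≥ (1 − ρ_c(q))·(q'−q)/(1−q)`; in particular `ρ_c` is strictly
increasing on `[0, q̄]`. -/
theorem rhoC_strictly_increasing
    {d : ℕ} (hd : 1 ≤ d)
    (P : ℝ → Measure (ConfigD d)) (hP : ∀ p ∈ Set.Icc (0 : ℝ) 1, IsBernoulli p (P p)) :
    (∀ q q' : ℝ, 0 ≤ q → q < q' → q' ≤ qbar P →
      (1 - rhoC P q) * (q' - q) / (1 - q) ≤ rhoC P q' - rhoC P q) ∧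
    StrictMonoOn (rhoC P) (Set.Icc 0 (qbar P)) := by
  obtain ⟨hsub, hmono⟩ := rhoC_strictly_increasing_general hd P hP
  exact ⟨fun q q' hq hqq' hq' => hsub q q' hq hqq' (hq'.trans (qbar_le_one P)), hmono⟩
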